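/- Fix a constant R* > 0, and for each n let C_W = C_W(n) ∈ ℝ₊. Suppose W, Ŵ ∈ ℝⁿ and s, ŝ ∈ ℝ₊ⁿ satisfy ‖W‖∞ ≤ C_W, ‖Ŵ‖∞ ≤ C_W, Σⱼ sⱼ = Σⱼ ŝⱼ = n, ‖W − Ŵ‖∞ ≤ γ₁ C_W, and ‖s − ŝ‖₂ ≤ γ₂ √n. Define τ(W, s) = (T Σⱼ Wⱼ² sⱼ²/(1 + sⱼT)²)^{1/2} · (Σⱼ sⱼ/(1 + sⱼT))^{−1/2} where T = T_rc(s, R*), and similarly τ(Ŵ, ŝ) with T̂ = T_rc(ŝ, R*). Then there is a constant c = c(R*) such that for all sufficiently large n: |τ(W, s) − τ(Ŵ, ŝ)| ≤ γ₁ C_W + c · C_W γ₂ n⁴ 2^{4nR*}. -/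

import Mathlib

open Real

/-- Euclidean (`ℓ₂`) norm of a vector in `ℝⁿ`. -/
noncomputable def l2norm {n : ℕ} (v : Fin n → ℝ) : ℝ :=
  Real.sqrt (∑ i, (v i) ^ 2)

/-- Random-coding rate `R_rc(λ, T) = (1/(2n)) Σᵢ log₂(1 + λᵢ T)`. -/
noncomputable def Rrc {n : ℕ} (lam : Fin n → ℝ) (T : ℝ) : ℝ :=
  (1 / (2 * (n : ℝ))) * ∑ i, Real.logb 2 (1 + lam i * T)

/-- `T_rc(λ, R)`: the unique `T > 0` with `R_rc(λ, T) = R`. -/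
noncomputable def Trc {n : ℕ} (lam : Fin n → ℝ) (R : ℝ) : ℝ :=
  Classical.epsilon fun T => 0 < T ∧ Rrc lam T = R

/-- Scaling parameter `τ(W, s)` with weights `s` and parameter `T`:
`τ = (T Σⱼ Wⱼ² sⱼ²/(1+sⱼT)²)^{1/2} (Σⱼ sⱼ/(1+sⱼT))^{-1/2}`. -/
noncomputable def tauDef {n : ℕ} (s W : Fin n → ℝ) (T : ℝ) : ℝ :=
  Real.sqrt (T * ∑ j, (W j) ^ 2 * (s j) ^ 2 / (1 + s j * T) ^ 2) /
    Real.sqrt (∑ j, s j / (1 + s j * T))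

lemma aux_l2_triangle {n : ℕ} (u v : Fin n → ℝ) :
    |Real.sqrt (∑ i, (u i)^2) - Real.sqrt (∑ i, (v i)^2)| ≤ Real.sqrt (∑ i, (u i - v i)^2) := by
  have h := abs_norm_sub_norm_le (WithLp.toLp 2 u : EuclideanSpace ℝ (Fin n)) (WithLp.toLp 2 v)
  simpa [EuclideanSpace.norm_eq, sq_abs] using h

lemma aux_l2_l1 {n : ℕ} (u : Fin n → ℝ) :
    Real.sqrt (∑ i, (u i)^2) ≤ ∑ i, |u i| := by
  have h0 : 0 ≤ ∑ i, |u i| := Finset.sum_nonneg fun i _ => abs_nonneg _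
  apply Real.sqrt_le_iff.mpr ⟨h0, ?_⟩
  have := Finset.sum_sq_le_sq_sum_of_nonneg (s := Finset.univ) (f := fun i => |u i|)
    (fun i _ => abs_nonneg _)
  simpa [sq_abs] using this

lemma aux_l1_l2 {n : ℕ} (u : Fin n → ℝ) :
    ∑ i, |u i| ≤ Real.sqrt n * Real.sqrt (∑ i, (u i)^2) := by
  rw [← Real.sqrt_mul (Nat.cast_nonneg n)]
  apply Real.le_sqrt_of_sq_le
  have := sq_sum_le_card_mul_sum_sq (s := (Finset.univ : Finset (Fin n))) (f := fun i => |u i|)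
  simpa [sq_abs] using this

/-- some coordinate is at least one -/
lemma aux_ex_one {n : ℕ} (hn : 1 ≤ n) (s : Fin n → ℝ) (hs : ∑ j, s j = (n : ℝ)) :
    ∃ k, 1 ≤ s k := by
  by_contra! h
  have : Nonempty (Fin n) := ⟨⟨0, hn⟩⟩
  have := Finset.sum_lt_sum_of_nonempty (s := (Finset.univ : Finset (Fin n)))
    Finset.univ_nonempty (fun i _ => h i)
  simp [hs] at this

lemma aux_log_term {a T : ℝ} (ha : 0 ≤ a) (hT : 0 ≤ T) : 0 ≤ Real.logb 2 (1 + a * T) :=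
  Real.logb_nonneg (by norm_num) (by nlinarith [mul_nonneg ha hT])

lemma aux_Trc {n : ℕ} (hn : 1 ≤ n) (R : ℝ) (hR : 0 < R) (s : Fin n → ℝ) (hs0 : ∀ j, 0 ≤ s j)
    (hs : ∑ j, s j = (n : ℝ)) : 0 < Trc s R ∧ Rrc s (Trc s R) = R := by
  have hn' : (0 : ℝ) < n := by exact_mod_cast hn
  obtain ⟨k, hk⟩ := aux_ex_one hn s hs
  refine Classical.epsilon_spec (p := fun T => 0 < T ∧ Rrc s T = R) ?_
  set M : ℝ := (2 : ℝ) ^ (2 * (n : ℝ) * R) with hM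
  have hM0 : 0 < M := by positivity
  have hcont : ContinuousOn (fun T => Rrc s T) (Set.Icc 0 M) := by
    unfold Rrc Real.logb
    refine continuousOn_const.mul (continuousOn_finsetSum _ fun i _ => ?_)
    refine ContinuousOn.div_const (ContinuousOn.log (by fun_prop) ?_) _
    intro x hx
    have := mul_nonneg (hs0 i) hx.1
    positivity
  have h0 : Rrc s 0 = 0 := by simp [Rrc]
  have h1 : R ≤ Rrc s M := by
    have h2 : Real.logb 2 (1 + s k * M) ≤ ∑ i, Real.logb 2 (1 + s i * M) :=
      Finset.single_le_sum (f := fun i => Real.logb 2 (1 + s i * M))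
        (fun i _ => aux_log_term (hs0 i) hM0.le) (Finset.mem_univ k)
    have h3 : 2 * (n : ℝ) * R ≤ Real.logb 2 (1 + s k * M) := by
      rw [Real.le_logb_iff_rpow_le (by norm_num) (by nlinarith)]
      nlinarith
    unfold Rrc
    rw [one_div, ← div_eq_inv_mul, le_div_iff₀ (by positivity)]
    linarith
  obtain ⟨T, hT, hTR⟩ := intermediate_value_Icc hM0.le hcont
    (show R ∈ Set.Icc (Rrc s 0) (Rrc s M) from ⟨by rw [h0]; exact hR.le, h1⟩)
  refine ⟨T, lt_of_le_of_ne hT.1 ?_, hTR⟩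
  rintro rfl
  simp only [h0] at hTR
  linarith

lemma aux_sum_logb {n : ℕ} (hn : 1 ≤ n) (R T : ℝ) (s : Fin n → ℝ) (h : Rrc s T = R) :
    ∑ i, Real.logb 2 (1 + s i * T) = 2 * n * R := by
  have hn' : (0 : ℝ) < n := by exact_mod_cast hn
  rw [← h]; unfold Rrc
  rw [one_div, mul_inv_cancel_left₀ (by positivity)]

lemma aux_T_le {n : ℕ} (hn : 1 ≤ n) (R T : ℝ) (hT : 0 < T) (s : Fin n → ℝ) (hs0 : ∀ j, 0 ≤ s j)
    (hs : ∑ j, s j = (n : ℝ)) (h : Rrc s T = R) : 1 + T ≤ (2 : ℝ) ^ (2 * (n : ℝ) * R) := by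
  obtain ⟨k, hk⟩ := aux_ex_one hn s hs
  have h1 := aux_sum_logb hn R T s h
  have h2 : Real.logb 2 (1 + s k * T) ≤ ∑ i, Real.logb 2 (1 + s i * T) :=
    Finset.single_le_sum (f := fun i => Real.logb 2 (1 + s i * T))
      (fun i _ => aux_log_term (hs0 i) hT.le) (Finset.mem_univ k)
  rw [h1, Real.logb_le_iff_le_rpow (by norm_num) (by nlinarith)] at h2
  nlinarith

lemma aux_P_ge {n : ℕ} (hn : 1 ≤ n) (R T : ℝ) (hT : 0 < T) (s : Fin n → ℝ)
    (hs0 : ∀ j, 0 ≤ s j) (h : Rrc s T = R) :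
    1 - (2 : ℝ) ^ (-(2 * R)) ≤ ∑ i, s i * T / (1 + s i * T) := by
  have hx : ∀ i, 0 ≤ s i * T := fun i => mul_nonneg (hs0 i) hT.le
  have h1 := aux_sum_logb hn R T s h
  have : ∃ j, 2 * R ≤ Real.logb 2 (1 + s j * T) := by
    by_contra! hc
    have : Nonempty (Fin n) := ⟨⟨0, hn⟩⟩
    have := Finset.sum_lt_sum_of_nonempty (s := (Finset.univ : Finset (Fin n)))
      Finset.univ_nonempty (fun i _ => hc i)
    simp [h1] at this
    linarith
  obtain ⟨j, hj⟩ := this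
  rw [Real.le_logb_iff_rpow_le (by norm_num) (by linarith [hx j])] at hj
  have h2 : s j * T / (1 + s j * T) ≤ ∑ i, s i * T / (1 + s i * T) :=
    Finset.single_le_sum (f := fun i => s i * T / (1 + s i * T))
      (fun i _ => div_nonneg (hx i) (by linarith [hx i])) (Finset.mem_univ j)
  refine le_trans ?_ h2
  rw [Real.rpow_neg (by norm_num)]
  have h3 : 0 < (2 : ℝ) ^ (2 * R) := by positivity
  have h4 : (1 + s j * T)⁻¹ ≤ ((2 : ℝ) ^ (2 * R))⁻¹ := inv_anti₀ h3 hj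
  have h5 : s j * T / (1 + s j * T) = 1 - (1 + s j * T)⁻¹ := by
    have : 1 + s j * T ≠ 0 := by linarith [hx j]
    field_simp; ring
  rw [h5]; linarith

lemma aux_Tdiff {n : ℕ} (s sh : Fin n → ℝ) (hs0 : ∀ j, 0 ≤ s j) (hsh0 : ∀ j, 0 ≤ sh j)
    (T T' : ℝ) (hT : 0 < T) (hT' : 0 < T') (k : Fin n) (hk : 1 ≤ sh k)
    (h : ∑ i, Real.logb 2 (1 + s i * T) = ∑ i, Real.logb 2 (1 + sh i * T')) :
    T' - T ≤ (1 + T') * T * ∑ i, |s i - sh i| := by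
  have hD : 0 ≤ ∑ i, |s i - sh i| := Finset.sum_nonneg fun i _ => abs_nonneg _
  rcases le_total T' T with hle | hle
  · have : 0 ≤ (1 + T') * T * ∑ i, |s i - sh i| := by positivity
    linarith
  have hl2 : Real.log 2 ≠ 0 := (Real.log_pos (by norm_num)).ne'
  have h' : ∑ i, Real.log (1 + s i * T) = ∑ i, Real.log (1 + sh i * T') := by
    simp only [Real.logb, ← Finset.sum_div] at h
    field_simp at h
    exact h
  have hA : ∑ i, (Real.log (1 + s i * T) - Real.log (1 + sh i * T)) ≤ ∑ i, |s i - sh i| * T := by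
    refine Finset.sum_le_sum fun i _ => ?_
    have ha : 0 ≤ s i * T := mul_nonneg (hs0 i) hT.le
    have hb : 0 ≤ sh i * T := mul_nonneg (hsh0 i) hT.le
    have hq : 0 < (1 + s i * T) / (1 + sh i * T) := by positivity
    rw [← Real.log_div (by positivity) (by positivity)]
    refine (Real.log_le_sub_one_of_pos hq).trans ?_
    rw [sub_le_iff_le_add, div_le_iff₀ (by positivity)]
    have := mul_le_mul_of_nonneg_right (le_abs_self (s i - sh i)) hT.le
    have h5 : 0 ≤ |s i - sh i| * T * (sh i * T) := by positivity
    nlinarith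
  have hB : (T' - T) / (1 + T') ≤
      ∑ i, (Real.log (1 + sh i * T') - Real.log (1 + sh i * T)) := by
    have h2 : Real.log (1 + sh k * T') - Real.log (1 + sh k * T) ≤
        ∑ i, (Real.log (1 + sh i * T') - Real.log (1 + sh i * T)) := by
      refine Finset.single_le_sum
        (f := fun i => Real.log (1 + sh i * T') - Real.log (1 + sh i * T)) (fun i _ => ?_)
        (Finset.mem_univ k)
      have hb : 0 ≤ sh i * T := mul_nonneg (hsh0 i) hT.le
      have := mul_le_mul_of_nonneg_left hle (hsh0 i)
      exact sub_nonneg.mpr (Real.log_le_log (by positivity) (by linarith))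
    refine le_trans ?_ h2
    have ha : 0 ≤ sh k * T' := mul_nonneg (hsh0 k) hT'.le
    have hb : 0 ≤ sh k * T := mul_nonneg (hsh0 k) hT.le
    have hq : 0 < (1 + sh k * T') / (1 + sh k * T) := by positivity
    rw [← Real.log_div (by positivity) (by positivity)]
    refine le_trans ?_ (Real.one_sub_inv_le_log_of_pos hq)
    rw [inv_div, le_sub_iff_add_le, div_add_div _ _ (by positivity) (by positivity),
      div_le_one (by positivity)]
    nlinarith [mul_nonneg (sub_nonneg.mpr hle) (sub_nonneg.mpr hk)]
  rw [Finset.sum_sub_distrib] at hA hB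
  rw [← Finset.sum_mul] at hA
  have hC : (T' - T) / (1 + T') ≤ (∑ i, |s i - sh i|) * T := by linarith
  rw [div_le_iff₀ (by positivity)] at hC
  linarith

lemma aux_tau {n : ℕ} (s W : Fin n → ℝ) (T : ℝ) (hT : 0 < T) :
    tauDef s W T = Real.sqrt (∑ j, (W j * (s j * T / (1 + s j * T))) ^ 2) /
      Real.sqrt (∑ j, s j * T / (1 + s j * T)) := by
  unfold tauDef
  have h1 : ∑ j, (W j * (s j * T / (1 + s j * T))) ^ 2
      = T * (T * ∑ j, (W j) ^ 2 * (s j) ^ 2 / (1 + s j * T) ^ 2) := by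
    rw [Finset.mul_sum, Finset.mul_sum]
    refine Finset.sum_congr rfl fun j _ => ?_
    rw [mul_pow, div_pow]; ring
  have h2 : ∑ j, s j * T / (1 + s j * T) = T * ∑ j, s j / (1 + s j * T) := by
    rw [Finset.mul_sum]
    refine Finset.sum_congr rfl fun j _ => ?_
    ring
  rw [h1, h2, Real.sqrt_mul hT.le (T * _), Real.sqrt_mul hT.le (∑ j, s j / (1 + s j * T)),
    mul_div_mul_left _ _ (Real.sqrt_pos.mpr hT).ne']

lemma aux_coord {n : ℕ} (v : Fin n → ℝ) (C : ℝ) (h : ‖v‖ ≤ C) (j : Fin n) : |v j| ≤ C :=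
  (norm_le_pi_norm v j).trans h

/-- weighted l2 bound by the square root of the sum -/
lemma aux_weighted {n : ℕ} (v p : Fin n → ℝ) (C : ℝ) (hC : 0 ≤ C) (hv : ∀ j, |v j| ≤ C)
    (hp0 : ∀ j, 0 ≤ p j) (hp1 : ∀ j, p j ≤ 1) :
    Real.sqrt (∑ j, (v j * p j) ^ 2) ≤ C * Real.sqrt (∑ j, p j) := by
  have : ∑ j, (v j * p j) ^ 2 ≤ C ^ 2 * ∑ j, p j := by
    rw [Finset.mul_sum]
    refine Finset.sum_le_sum fun j _ => ?_
    rw [mul_pow]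
    have h1 : v j ^ 2 ≤ C ^ 2 := sq_le_sq' (by linarith [abs_le.mp (hv j)]) (abs_le.mp (hv j)).2
    have h2 : p j ^ 2 ≤ p j := by nlinarith [hp0 j, hp1 j]
    exact mul_le_mul h1 h2 (sq_nonneg _) (sq_nonneg _)
  refine (Real.sqrt_le_sqrt this).trans ?_
  rw [Real.sqrt_mul (sq_nonneg _), Real.sqrt_sq hC]

/-- The core deterministic comparison. -/
lemma aux_core {n : ℕ} (W V p q : Fin n → ℝ) (C g c0 : ℝ) (hC : 0 ≤ C) (hg : 0 ≤ g)
    (hV : ∀ j, |V j| ≤ C) (hWV : ∀ j, |W j - V j| ≤ g)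
    (hp0 : ∀ j, 0 ≤ p j) (hp1 : ∀ j, p j ≤ 1) (hq0 : ∀ j, 0 ≤ q j) (hq1 : ∀ j, q j ≤ 1)
    (hc0 : 0 < c0) (hc1 : c0 ≤ 1) (hP : c0 ≤ ∑ j, p j) (hQ : c0 ≤ ∑ j, q j) :
    |Real.sqrt (∑ j, (W j * p j) ^ 2) / Real.sqrt (∑ j, p j)
      - Real.sqrt (∑ j, (V j * q j) ^ 2) / Real.sqrt (∑ j, q j)|
      ≤ g + C * (2 / c0) * ∑ j, |p j - q j| := by
  set P := ∑ j, p j with hPd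
  set Q := ∑ j, q j with hQd
  set D := ∑ j, |p j - q j| with hD
  have hD0 : 0 ≤ D := Finset.sum_nonneg fun i _ => abs_nonneg _
  have hPQ : |P - Q| ≤ D := by
    rw [hPd, hQd, ← Finset.sum_sub_distrib]
    exact Finset.abs_sum_le_sum_abs _ _
  have h1 : |Real.sqrt (∑ j, (W j * p j) ^ 2) - Real.sqrt (∑ j, (V j * p j) ^ 2)|
      ≤ g * Real.sqrt P := by
    refine (aux_l2_triangle _ _).trans ?_
    have := aux_weighted (fun j => W j - V j) p g hg hWV hp0 hp1
    simpa [sub_mul] using this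
  have h2 : |Real.sqrt (∑ j, (V j * p j) ^ 2) - Real.sqrt (∑ j, (V j * q j) ^ 2)| ≤ C * D := by
    refine (aux_l2_triangle _ _).trans ((aux_l2_l1 _).trans ?_)
    rw [hD, Finset.mul_sum]
    refine Finset.sum_le_sum fun j _ => ?_
    rw [← mul_sub, abs_mul]
    exact mul_le_mul_of_nonneg_right (hV j) (abs_nonneg _)
  have h3 : Real.sqrt (∑ j, (V j * q j) ^ 2) ≤ C * Real.sqrt Q := aux_weighted V q C hC hV hq0 hq1
  have h30 : 0 ≤ Real.sqrt (∑ j, (V j * q j) ^ 2) := Real.sqrt_nonneg _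
  set a := Real.sqrt (∑ j, (W j * p j) ^ 2)
  set b := Real.sqrt (∑ j, (V j * p j) ^ 2)
  set d := Real.sqrt (∑ j, (V j * q j) ^ 2)
  have hP0 : 0 < P := lt_of_lt_of_le hc0 hP
  have hQ0 : 0 < Q := lt_of_lt_of_le hc0 hQ
  have hx0 : 0 < Real.sqrt P := Real.sqrt_pos.mpr hP0
  have hy0 : 0 < Real.sqrt Q := Real.sqrt_pos.mpr hQ0
  have hx2 : Real.sqrt P ^ 2 = P := Real.sq_sqrt hP0.le
  have hy2 : Real.sqrt Q ^ 2 = Q := Real.sq_sqrt hQ0.le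
  have hxc : c0 ≤ Real.sqrt P := Real.le_sqrt_of_sq_le (by nlinarith)
  set x := Real.sqrt P
  set y := Real.sqrt Q
  have e1 : a / x - d / y = (a - b) / x + (b - d) / x + (d / y) * ((y - x) / x) := by
    field_simp; ring
  have t1 : |(a - b) / x| ≤ g := by
    rw [abs_div, abs_of_pos hx0, div_le_iff₀ hx0]; exact h1
  have t2 : |(b - d) / x| ≤ C * D / c0 := by
    rw [abs_div, abs_of_pos hx0]
    exact div_le_div₀ (by positivity) h2 hc0 hxc
  have t3 : |y - x| / x ≤ D / c0 := by
    rw [div_le_div_iff₀ hx0 hc0]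
    have : |y - x| * (x + y) = |P - Q| := by
      rw [← hx2, ← hy2, ← abs_of_pos (add_pos hx0 hy0), ← abs_mul, abs_sub_comm (x ^ 2)]
      congr 1; ring
    have h6 : |y - x| * x ≤ D := by nlinarith [mul_nonneg (abs_nonneg (y - x)) hy0.le]
    have h7 : |y - x| * x * c0 ≤ D * x ^ 2 := by
      rw [hx2]; exact mul_le_mul h6 hP hc0.le hD0
    by_contra! hlt
    nlinarith [mul_lt_mul_of_pos_right hlt hx0]
  have t4 : |(d / y) * ((y - x) / x)| ≤ C * (D / c0) := by
    rw [abs_mul, abs_div (y - x), abs_of_pos hx0, abs_of_nonneg (div_nonneg h30 hy0.le)]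
    exact mul_le_mul ((div_le_iff₀ hy0).mpr h3) t3 (by positivity) hC
  rw [e1]
  refine (abs_add_three _ _ _).trans ?_
  have : C * (2 / c0) * D = C * D / c0 + C * (D / c0) := by ring
  linarith

set_option maxHeartbeats 1000000 in
/-- `τ` perturbation bound. The sup norm `‖·‖` on `Fin n → ℝ` is `‖·‖∞`. -/
theorem stmt_11 (Rstar : ℝ) (hRstar : 0 < Rstar) :
    ∃ c : ℝ, 0 < c ∧ ∃ n₀ : ℕ, ∀ n : ℕ, n₀ ≤ n →
      ∀ (CW γ₁ γ₂ : ℝ), 0 ≤ CW →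
      ∀ (W Wh s sh : Fin n → ℝ),
        (∀ j, 0 ≤ s j) → (∀ j, 0 ≤ sh j) →
        ‖W‖ ≤ CW → ‖Wh‖ ≤ CW →
        (∑ j, s j) = (n : ℝ) → (∑ j, sh j) = (n : ℝ) →
        ‖W - Wh‖ ≤ γ₁ * CW →
        l2norm (s - sh) ≤ γ₂ * Real.sqrt (n : ℝ) →
        |tauDef s W (Trc s Rstar) - tauDef sh Wh (Trc sh Rstar)|
          ≤ γ₁ * CW + c * CW * γ₂ * (n : ℝ) ^ 4 * (2 : ℝ) ^ (4 * (n : ℝ) * Rstar) := by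
  have hc1 : (2 : ℝ) ^ (-(2 * Rstar)) < 1 :=
    Real.rpow_lt_one_of_one_lt_of_neg (by norm_num) (by linarith)
  have hc2 : 0 < (2 : ℝ) ^ (-(2 * Rstar)) := by positivity
  set c0 : ℝ := 1 - (2 : ℝ) ^ (-(2 * Rstar)) with hc0d
  have hc0 : 0 < c0 := by linarith
  refine ⟨4 / c0, by positivity, 1, ?_⟩
  intro n hn CW γ₁ γ₂ hCW W Wh s sh hs0 hsh0 _ hWh hs hsh hWW hl2
  have hn' : (1 : ℝ) ≤ n := by exact_mod_cast hn
  obtain ⟨hT, hTR⟩ := aux_Trc hn Rstar hRstar s hs0 hs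
  obtain ⟨hT', hTR'⟩ := aux_Trc hn Rstar hRstar sh hsh0 hsh
  set T := Trc s Rstar
  set T' := Trc sh Rstar
  rw [aux_tau s W T hT, aux_tau sh Wh T' hT']
  have hx : ∀ j, 0 ≤ s j * T := fun j => mul_nonneg (hs0 j) hT.le
  have hy : ∀ j, 0 ≤ sh j * T' := fun j => mul_nonneg (hsh0 j) hT'.le
  have core := aux_core W Wh (fun j => s j * T / (1 + s j * T))
    (fun j => sh j * T' / (1 + sh j * T')) CW (γ₁ * CW) c0 hCW ((norm_nonneg _).trans hWW)
    (aux_coord _ _ hWh) (aux_coord (W - Wh) _ hWW)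
    (fun j => div_nonneg (hx j) (by linarith [hx j]))
    (fun j => (div_le_one (by linarith [hx j])).mpr (by linarith))
    (fun j => div_nonneg (hy j) (by linarith [hy j]))
    (fun j => (div_le_one (by linarith [hy j])).mpr (by linarith))
    hc0 (by linarith)
    (aux_P_ge hn Rstar T hT s hs0 hTR) (aux_P_ge hn Rstar T' hT' sh hsh0 hTR')
  refine core.trans ?_
  have hM1 := aux_T_le hn Rstar T hT s hs0 hs hTR
  have hM2 := aux_T_le hn Rstar T' hT' sh hsh0 hsh hTR'
  have hMM : (2 : ℝ) ^ (4 * (n : ℝ) * Rstar) = ((2 : ℝ) ^ (2 * (n : ℝ) * Rstar)) ^ 2 := by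
    rw [← Real.rpow_natCast, ← Real.rpow_mul (by norm_num)]
    congr 1; push_cast; ring
  rw [hMM]
  set M := (2 : ℝ) ^ (2 * (n : ℝ) * Rstar)
  set Δ := ∑ i, |s i - sh i| with hΔ
  have hΔ0 : 0 ≤ Δ := Finset.sum_nonneg fun i _ => abs_nonneg _
  have hΔn : Δ ≤ n * γ₂ := by
    refine (aux_l1_l2 (fun i => s i - sh i)).trans ?_
    have : Real.sqrt (∑ i, (s i - sh i) ^ 2) ≤ γ₂ * Real.sqrt (n : ℝ) := hl2
    calc _ ≤ Real.sqrt n * (γ₂ * Real.sqrt n) :=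
          mul_le_mul_of_nonneg_left this (Real.sqrt_nonneg _)
      _ = (Real.sqrt n * Real.sqrt n) * γ₂ := by ring
      _ = n * γ₂ := by rw [Real.mul_self_sqrt (by linarith)]
  have hsum : ∑ i, Real.logb 2 (1 + s i * T) = ∑ i, Real.logb 2 (1 + sh i * T') := by
    rw [aux_sum_logb hn Rstar T s hTR, aux_sum_logb hn Rstar T' sh hTR']
  obtain ⟨k, hk⟩ := aux_ex_one hn s hs
  obtain ⟨k', hk'⟩ := aux_ex_one hn sh hsh
  have d1 := aux_Tdiff s sh hs0 hsh0 T T' hT hT' k' hk' hsum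
  have d2 := aux_Tdiff sh s hsh0 hs0 T' T hT' hT k hk hsum.symm
  simp only [abs_sub_comm (sh _) (s _)] at d2
  rw [← hΔ] at d1 d2
  have hTT : |T - T'| ≤ M ^ 2 * Δ := by
    have e1 : (1 + T') * T ≤ M ^ 2 := by nlinarith
    have e2 : (1 + T) * T' ≤ M ^ 2 := by nlinarith
    have e3 := mul_le_mul_of_nonneg_right e1 hΔ0
    have e4 := mul_le_mul_of_nonneg_right e2 hΔ0
    rw [abs_le]; constructor <;> linarith
  have hD : ∑ j, |s j * T / (1 + s j * T) - sh j * T' / (1 + sh j * T')|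
      ≤ Δ * T + n * |T - T'| := by
    rw [← hsh, hΔ, Finset.sum_mul, Finset.sum_mul, ← Finset.sum_add_distrib]
    refine Finset.sum_le_sum fun j _ => ?_
    have hxj := hx j
    have hyj := hy j
    have e : s j * T / (1 + s j * T) - sh j * T' / (1 + sh j * T')
        = (s j * T - sh j * T') / ((1 + s j * T) * (1 + sh j * T')) := by
      rw [div_sub_div _ _ (by positivity) (by positivity)]
      congr 1; ring
    rw [e, abs_div, abs_of_pos (a := (1 + s j * T) * (1 + sh j * T')) (by positivity)]
    have e2 : |s j * T - sh j * T'| ≤ |s j - sh j| * T + sh j * |T - T'| := by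
      have : s j * T - sh j * T' = (s j - sh j) * T + sh j * (T - T') := by ring
      rw [this]
      refine (abs_add_le _ _).trans ?_
      rw [abs_mul, abs_mul, abs_of_pos hT, abs_of_nonneg (hsh0 j)]
    refine (div_le_self (abs_nonneg _) ?_).trans e2
    nlinarith [mul_nonneg hxj hyj]
  have hD2 : ∑ j, |s j * T / (1 + s j * T) - sh j * T' / (1 + sh j * T')|
      ≤ 2 * γ₂ * (n : ℝ) ^ 4 * M ^ 2 := by
    refine hD.trans ?_
    have hγ : 0 ≤ γ₂ := by
      by_contra! hneg
      nlinarith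
    have e1 : Δ * T ≤ n * γ₂ * M ^ 2 :=
      mul_le_mul hΔn (by nlinarith) hT.le (by positivity)
    have e2 : (n : ℝ) * |T - T'| ≤ n * (M ^ 2 * (n * γ₂)) :=
      mul_le_mul_of_nonneg_left (hTT.trans (mul_le_mul_of_nonneg_left hΔn (by positivity)))
        (by positivity)
    have hγM : 0 ≤ γ₂ * M ^ 2 := by positivity
    have p1 : (n : ℝ) ≤ (n : ℝ) ^ 4 := le_self_pow₀ hn' (by norm_num)
    have p2 : (n : ℝ) ^ 2 ≤ (n : ℝ) ^ 4 := pow_le_pow_right₀ hn' (by norm_num)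
    have q1 := mul_le_mul_of_nonneg_right p1 hγM
    have q2 := mul_le_mul_of_nonneg_right p2 hγM
    linarith
  have := mul_le_mul_of_nonneg_left hD2 (show 0 ≤ CW * (2 / c0) by positivity)
  have e : CW * (2 / c0) * (2 * γ₂ * (n : ℝ) ^ 4 * M ^ 2)
      = 4 / c0 * CW * γ₂ * (n : ℝ) ^ 4 * M ^ 2 := by ring
  linarith
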